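/- On ℝ² with a smooth Riemannian metric g, let k̃(x, u, w) = √(det g(x))·ε_{ij}uⁱwʲ/‖u‖³ (u ≠ 0) be the signed Frenet curvature in covariant coordinates. Then for every (x, u, w) with u ≠ 0 the covariant momenta satisfy π⁽¹⁾ᵢ := ∂k̃/∂wⁱ = −√(det g(x))·ε_{ij}uʲ/‖u‖³; moreover, along any smooth curve x : ℝ → ℝ² with x'(t) ≠ 0, writing u(t) = x'(t) and w(t)ⁱ = x''ⁱ + Γⁱ_{lj}x'ˡx'ʲ, the momentum πᵢ(t) := (∂k̃/∂uⁱ)(x,u,w) − (π⁽¹⁾)'ᵢ(t) (with ' the covariant derivative of covectors along the curve) equals πᵢ(t) = −√(det g(x(t)))·ε_{ij}w(t)ʲ/‖u(t)‖³. -/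

import Mathlib

noncomputable section
open scoped BigOperators

/-- The partial derivative `∂f/∂xˡ` of a scalar function on `ℝⁿ`. -/
def pd {n : ℕ} (f : (Fin n → ℝ) → ℝ) (l : Fin n) (x : Fin n → ℝ) : ℝ :=
  fderiv ℝ f x (Pi.single l 1)

/-- The Christoffel symbols `Γⁱ_{lj} = ½g^{ik}(∂_l g_{kj} + ∂_j g_{kl} − ∂_k g_{lj})`
of a metric `g` with inverse `ginv`. -/
def christoffel {n : ℕ} (g ginv : (Fin n → ℝ) → Fin n → Fin n → ℝ)
    (i l j : Fin n) (x : Fin n → ℝ) : ℝ :=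
  (1 / 2) * ∑ k, ginv x i k *
    (pd (fun y => g y k j) l x + pd (fun y => g y k l) j x - pd (fun y => g y l j) k x)

/-- The covariant acceleration `wⁱ = u̇ⁱ + Γⁱ_{lj}(x)uˡuʲ`. -/
def covAccel {n : ℕ} (g ginv : (Fin n → ℝ) → Fin n → Fin n → ℝ)
    (x u v : Fin n → ℝ) (i : Fin n) : ℝ :=
  v i + ∑ l, ∑ j, christoffel g ginv i l j x * u l * u j

/-- The Riemannian norm `‖u‖ = (g_{ij}(x)uⁱuʲ)^{1/2}`. -/
def gnorm {n : ℕ} (g : (Fin n → ℝ) → Fin n → Fin n → ℝ) (x u : Fin n → ℝ) : ℝ :=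
  Real.sqrt (∑ i, ∑ j, g x i j * u i * u j)

/-- The second jet `j²x(t) = (x(t), x'(t), x''(t))` of a curve. -/
def jet2 {n : ℕ} (x : ℝ → Fin n → ℝ) (t : ℝ) :
    (Fin n → ℝ) × (Fin n → ℝ) × (Fin n → ℝ) :=
  (x t, deriv x t, deriv (deriv x) t)

/-- The covariant second jet `(x(t), x'(t), w(t))` of a curve,
`w(t)ⁱ = x''ⁱ + Γⁱ_{lj}x'ˡx'ʲ`. -/
def jet2Cov {n : ℕ} (g ginv : (Fin n → ℝ) → Fin n → Fin n → ℝ)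
    (x : ℝ → Fin n → ℝ) (t : ℝ) :
    (Fin n → ℝ) × (Fin n → ℝ) × (Fin n → ℝ) :=
  (x t, deriv x t, fun i => covAccel g ginv (x t) (deriv x t) (deriv (deriv x) t) i)

/-- The `l`-th component of the Euler–Poisson expression
`∂L/∂xˡ − (d/dt)(∂L/∂uˡ) + (d²/dt²)(∂L/∂u̇ˡ)` of a second-order Lagrangian
`L(x,u,u̇)` along the curve `x`. -/
def eulerPoisson {n : ℕ} (L : (Fin n → ℝ) × (Fin n → ℝ) × (Fin n → ℝ) → ℝ)
    (x : ℝ → Fin n → ℝ) (l : Fin n) (t : ℝ) : ℝ :=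
  fderiv ℝ L (jet2 x t) (Pi.single l 1, 0, 0)
    - deriv (fun s => fderiv ℝ L (jet2 x s) (0, Pi.single l 1, 0)) t
    + deriv (deriv (fun s => fderiv ℝ L (jet2 x s) (0, 0, Pi.single l 1))) t

/-- The covariant derivative along the curve `x` of a covector field `α` given along
the curve: `(α)'ᵢ = dαᵢ/dt − Γʲ_{li}x'ˡαⱼ`. -/
def covDeriv {n : ℕ} (g ginv : (Fin n → ℝ) → Fin n → Fin n → ℝ)
    (x : ℝ → Fin n → ℝ) (α : ℝ → Fin n → ℝ) (t : ℝ) (i : Fin n) : ℝ :=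
  deriv (fun s => α s i) t
    - ∑ j, ∑ l, christoffel g ginv j l i (x t) * deriv x t l * α t j

/-- The determinant of a metric on `ℝ²`. -/
def detg (g : (Fin 2 → ℝ) → Fin 2 → Fin 2 → ℝ) (x : Fin 2 → ℝ) : ℝ :=
  g x 0 0 * g x 1 1 - g x 0 1 * g x 1 0

/-- The covector `(εb)ᵢ = ε_{ij}bʲ` with `ε₁₂ = 1` (indices in `{0,1}`). -/
def epsRow (i : Fin 2) (b : Fin 2 → ℝ) : ℝ := if i = 0 then b 1 else -b 0

/-- The signed Frenet curvature `k(x,u,u̇) = √(det g)·ε_{ij}uⁱwʲ/‖u‖³` on `ℝ²`,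
where `wⁱ = u̇ⁱ + Γⁱ_{lj}uˡuʲ`. -/
def frenetK (g ginv : (Fin 2 → ℝ) → Fin 2 → Fin 2 → ℝ)
    (q : (Fin 2 → ℝ) × (Fin 2 → ℝ) × (Fin 2 → ℝ)) : ℝ :=
  Real.sqrt (detg g q.1) *
      (q.2.1 0 * covAccel g ginv q.1 q.2.1 q.2.2 1
        - q.2.1 1 * covAccel g ginv q.1 q.2.1 q.2.2 0)
    / gnorm g q.1 q.2.1 ^ 3

/-- The signed Frenet curvature in the covariant coordinates `(x, u, w)`:
`k̃(x,u,w) = √(det g)·ε_{ij}uⁱwʲ/‖u‖³`. -/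
def frenetKCov (g : (Fin 2 → ℝ) → Fin 2 → Fin 2 → ℝ)
    (q : (Fin 2 → ℝ) × (Fin 2 → ℝ) × (Fin 2 → ℝ)) : ℝ :=
  Real.sqrt (detg g q.1) * (q.2.1 0 * q.2.2 1 - q.2.1 1 * q.2.2 0)
    / gnorm g q.1 q.2.1 ^ 3


lemma aux_detg_pos (g : (Fin 2 → ℝ) → Fin 2 → Fin 2 → ℝ)
    (hsymm : ∀ x i j, g x i j = g x j i)
    (hpos : ∀ (x u : Fin 2 → ℝ), u ≠ 0 → 0 < ∑ i, ∑ j, g x i j * u i * u j)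
    (x : Fin 2 → ℝ) : 0 < detg g x := by
  have h0 : 0 < g x 0 0 := by
    have := hpos x ![1, 0] (by intro h; simpa using congrFun h 0)
    simpa [Fin.sum_univ_two] using this
  have h1 := hpos x ![-g x 0 1, g x 0 0] (by
    intro h
    have := congrFun h 1
    simp at this
    exact h0.ne' this)
  simp [Fin.sum_univ_two] at h1
  have hs := hsymm x 1 0
  unfold detg
  rw [hs] at h1 ⊢
  have : 0 < g x 0 0 * (g x 0 0 * g x 1 1 - g x 0 1 * g x 0 1) := by nlinarith
  exact (mul_pos_iff_of_pos_left h0).1 this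

lemma aux_diff (g : (Fin 2 → ℝ) → Fin 2 → Fin 2 → ℝ)
    (hg : ∀ i j, ContDiff ℝ (⊤ : ℕ∞) (fun x => g x i j))
    (hsymm : ∀ x i j, g x i j = g x j i)
    (hpos : ∀ (x u : Fin 2 → ℝ), u ≠ 0 → 0 < ∑ i, ∑ j, g x i j * u i * u j)
    (x u w : Fin 2 → ℝ) (hu : u ≠ 0) :
    DifferentiableAt ℝ (frenetKCov g) (x, u, w) := by
  have hgd : ∀ i j, DifferentiableAt ℝ
      (fun q : (Fin 2 → ℝ) × (Fin 2 → ℝ) × (Fin 2 → ℝ) => g q.1 i j) (x, u, w) := by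
    intro i j
    have h1 : DifferentiableAt ℝ (fun x => g x i j) x :=
      ((hg i j).differentiable (by simp)).differentiableAt
    exact DifferentiableAt.comp (g := fun x => g x i j) (x, u, w) h1 differentiableAt_fst
  have hQ := hpos x u hu
  have hD := aux_detg_pos g hsymm hpos x
  have hN : gnorm g x u ≠ 0 := (Real.sqrt_pos.2 hQ).ne'
  have d1 : DifferentiableAt ℝ
      (fun q : (Fin 2 → ℝ) × (Fin 2 → ℝ) × (Fin 2 → ℝ) => Real.sqrt (detg g q.1)) (x, u, w) := by
    refine DifferentiableAt.sqrt ?_ hD.ne'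
    unfold detg
    exact ((hgd 0 0).mul (hgd 1 1)).sub ((hgd 0 1).mul (hgd 1 0))
  have hu' : ∀ i, DifferentiableAt ℝ
      (fun q : (Fin 2 → ℝ) × (Fin 2 → ℝ) × (Fin 2 → ℝ) => q.2.1 i) (x, u, w) := by
    intro i; fun_prop
  have hw' : ∀ i, DifferentiableAt ℝ
      (fun q : (Fin 2 → ℝ) × (Fin 2 → ℝ) × (Fin 2 → ℝ) => q.2.2 i) (x, u, w) := by
    intro i; fun_prop
  have d2 : DifferentiableAt ℝ
      (fun q : (Fin 2 → ℝ) × (Fin 2 → ℝ) × (Fin 2 → ℝ) => gnorm g q.1 q.2.1) (x, u, w) := by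
    unfold gnorm
    refine DifferentiableAt.sqrt ?_ hQ.ne'
    simp only [Fin.sum_univ_two]
    exact (((((hgd 0 0).mul (hu' 0)).mul (hu' 0)).add (((hgd 0 1).mul (hu' 0)).mul (hu' 1)))).add
      ((((hgd 1 0).mul (hu' 1)).mul (hu' 0)).add (((hgd 1 1).mul (hu' 1)).mul (hu' 1)))
  unfold frenetKCov
  have d3 : DifferentiableAt ℝ (fun q : (Fin 2 → ℝ) × (Fin 2 → ℝ) × (Fin 2 → ℝ) =>
      Real.sqrt (detg g q.1) * (q.2.1 0 * q.2.2 1 - q.2.1 1 * q.2.2 0)) (x, u, w) :=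
    d1.mul (((hu' 0).mul (hw' 1)).sub ((hu' 1).mul (hw' 0)))
  have d4 : DifferentiableAt ℝ (fun q : (Fin 2 → ℝ) × (Fin 2 → ℝ) × (Fin 2 → ℝ) =>
      gnorm g q.1 q.2.1 ^ 3) (x, u, w) := d2.pow 3
  have d5 : gnorm g x u ^ 3 ≠ 0 := pow_ne_zero 3 hN
  simp only [div_eq_mul_inv]
  exact d3.fun_mul (d4.fun_inv d5)

lemma aux_line (f : (Fin 2 → ℝ) × (Fin 2 → ℝ) × (Fin 2 → ℝ) → ℝ) (p v) (d : ℝ)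
    (hf : DifferentiableAt ℝ f p) (h : HasDerivAt (fun s : ℝ => f (p + s • v)) d 0) :
    fderiv ℝ f p v = d := by
  rw [← hf.lineDeriv_eq_fderiv]
  exact h.deriv

lemma aux_dw (g : (Fin 2 → ℝ) → Fin 2 → Fin 2 → ℝ)
    (hg : ∀ i j, ContDiff ℝ (⊤ : ℕ∞) (fun x => g x i j))
    (hsymm : ∀ x i j, g x i j = g x j i)
    (hpos : ∀ (x u : Fin 2 → ℝ), u ≠ 0 → 0 < ∑ i, ∑ j, g x i j * u i * u j)
    (x u w : Fin 2 → ℝ) (hu : u ≠ 0) (i : Fin 2) :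
    fderiv ℝ (frenetKCov g) (x, u, w) (0, 0, Pi.single i 1)
        = -(Real.sqrt (detg g x) * epsRow i u) / gnorm g x u ^ 3 := by
  apply aux_line _ _ _ _ (aux_diff g hg hsymm hpos x u w hu)
  have h : ∀ j : Fin 2, HasDerivAt (fun s : ℝ => w j + s * (Pi.single i 1 : Fin 2 → ℝ) j)
      ((Pi.single i 1 : Fin 2 → ℝ) j) 0 := by
    intro j
    simpa using ((hasDerivAt_id (0 : ℝ)).mul_const ((Pi.single i 1 : Fin 2 → ℝ) j)).const_add (w j)
  have := ((((h 1).const_mul (u 0)).sub ((h 0).const_mul (u 1))).const_mul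
    (Real.sqrt (detg g x))).div_const (gnorm g x u ^ 3)
  simp only [frenetKCov, Prod.fst_add, Prod.snd_add, Prod.smul_fst, Prod.smul_snd, smul_zero,
    add_zero, Pi.add_apply, Pi.smul_apply, smul_eq_mul, Pi.zero_apply]
  refine this.congr_deriv ?_
  fin_cases i <;> simp [epsRow]

lemma aux_du (g : (Fin 2 → ℝ) → Fin 2 → Fin 2 → ℝ)
    (hg : ∀ i j, ContDiff ℝ (⊤ : ℕ∞) (fun x => g x i j))
    (hsymm : ∀ x i j, g x i j = g x j i)
    (hpos : ∀ (x u : Fin 2 → ℝ), u ≠ 0 → 0 < ∑ i, ∑ j, g x i j * u i * u j)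
    (x u w : Fin 2 → ℝ) (hu : u ≠ 0) (i : Fin 2) :
    fderiv ℝ (frenetKCov g) (x, u, w) (0, Pi.single i 1, 0)
        = Real.sqrt (detg g x) * epsRow i w / gnorm g x u ^ 3
          - 3 * Real.sqrt (detg g x) * (u 0 * w 1 - u 1 * w 0) * (g x i 0 * u 0 + g x i 1 * u 1)
            / gnorm g x u ^ 5 := by
  apply aux_line _ _ _ _ (aux_diff g hg hsymm hpos x u w hu)
  have hQ := hpos x u hu
  have hN : gnorm g x u ≠ 0 := (Real.sqrt_pos.2 hQ).ne'
  have h : ∀ j : Fin 2, HasDerivAt (fun s : ℝ => u j + s * (Pi.single i 1 : Fin 2 → ℝ) j)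
      ((Pi.single i 1 : Fin 2 → ℝ) j) 0 := by
    intro j
    simpa using ((hasDerivAt_id (0 : ℝ)).mul_const ((Pi.single i 1 : Fin 2 → ℝ) j)).const_add (u j)
  have hq : ∀ j k : Fin 2, HasDerivAt (fun s : ℝ => g x j k *
      (u j + s * (Pi.single i 1 : Fin 2 → ℝ) j) * (u k + s * (Pi.single i 1 : Fin 2 → ℝ) k))
      (g x j k * (Pi.single i 1 : Fin 2 → ℝ) j * u k
        + g x j k * u j * (Pi.single i 1 : Fin 2 → ℝ) k) 0 := by
    intro j k
    refine (((h j).const_mul (g x j k)).mul (h k)).congr_deriv ?_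
    simp
  have hn := (((hq 0 0).add (hq 0 1)).add ((hq 1 0).add (hq 1 1))).sqrt (by
    simpa [Fin.sum_univ_two] using hQ.ne')
  have hNN : Real.sqrt (g x 0 0 * u 0 * u 0 + g x 0 1 * u 0 * u 1
      + (g x 1 0 * u 1 * u 0 + g x 1 1 * u 1 * u 1)) = gnorm g x u := by
    simp [gnorm, Fin.sum_univ_two]
  have := ((((h 0).mul_const (w 1)).sub ((h 1).mul_const (w 0))).const_mul
    (Real.sqrt (detg g x))).div (hn.pow 3) (by
      simp only [Pi.add_apply, zero_mul, add_zero, Pi.pow_apply]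
      rw [hNN]
      exact pow_ne_zero 3 hN)
  refine (this.congr_of_eventuallyEq (.of_forall fun s => ?_)).congr_deriv ?_
  · simp only [frenetKCov, gnorm, Fin.sum_univ_two, Prod.fst_add, Prod.snd_add, Prod.smul_fst,
      Prod.smul_snd, smul_zero, add_zero, Pi.add_apply, Pi.smul_apply, smul_eq_mul,
      Pi.zero_apply, Pi.div_apply, Pi.pow_apply, Pi.sub_apply]
  simp only [Pi.add_apply, Pi.sub_apply, Pi.pow_apply, zero_mul, add_zero]
  rw [hNN]
  have hs := hsymm x 1 0
  fin_cases i <;> simp [epsRow] <;> field_simp <;> rw [hs] <;> ring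

/-- Metric compatibility. -/
lemma aux_compat (g ginv : (Fin 2 → ℝ) → Fin 2 → Fin 2 → ℝ)
    (hsymm : ∀ x i j, g x i j = g x j i)
    (hinv : ∀ x i j, ∑ k, ginv x i k * g x k j = if i = j then (1 : ℝ) else 0)
    (x : Fin 2 → ℝ) (l k j : Fin 2) :
    pd (fun y => g y k j) l x = (∑ m, g x k m * christoffel g ginv m l j x)
      + ∑ m, g x j m * christoffel g ginv m l k x := by
  have hinv' : ∀ i j, ∑ k, g x i k * ginv x k j = if i = j then (1 : ℝ) else 0 := by
    have h1 : (Matrix.of (ginv x)) * (Matrix.of (g x)) = 1 := by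
      ext i j
      rw [Matrix.mul_apply, Matrix.one_apply]
      exact hinv x i j
    have h2 := mul_eq_one_comm.1 h1
    intro i j
    have := congrFun (congrFun h2 i) j
    rw [Matrix.mul_apply, Matrix.one_apply] at this
    exact this
  have low : ∀ k l j, ∑ m, g x k m * christoffel g ginv m l j x = (1 / 2) *
    (pd (fun y => g y k j) l x + pd (fun y => g y k l) j x - pd (fun y => g y l j) k x) := by
    intro k l j
    have a0 := hinv' k 0
    have a1 := hinv' k 1
    simp only [Fin.sum_univ_two] at a0 a1
    simp only [christoffel, Fin.sum_univ_two]
    fin_cases k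
    · simp at a0 a1 ⊢
      linear_combination (1 / 2) * (pd (fun y => g y 0 j) l x + pd (fun y => g y 0 l) j x
        - pd (fun y => g y l j) 0 x) * a0 + (1 / 2) * (pd (fun y => g y 1 j) l x
        + pd (fun y => g y 1 l) j x - pd (fun y => g y l j) 1 x) * a1
    · simp at a0 a1 ⊢
      linear_combination (1 / 2) * (pd (fun y => g y 0 j) l x + pd (fun y => g y 0 l) j x
        - pd (fun y => g y l j) 0 x) * a0 + (1 / 2) * (pd (fun y => g y 1 j) l x
        + pd (fun y => g y 1 l) j x - pd (fun y => g y l j) 1 x) * a1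
  rw [low, low]
  have e : ∀ i j, (fun y => g y i j) = fun y => g y j i := fun i j => funext fun y => hsymm y i j
  rw [e j k, e j l, e l k]
  ring

lemma aux_chr_symm (g ginv : (Fin 2 → ℝ) → Fin 2 → Fin 2 → ℝ)
    (hsymm : ∀ x i j, g x i j = g x j i) (x : Fin 2 → ℝ) (m l j : Fin 2) :
    christoffel g ginv m l j x = christoffel g ginv m j l x := by
  have e : (fun y => g y l j) = fun y => g y j l := funext fun y => hsymm y l j
  unfold christoffel
  rw [e]
  congr 1
  refine Finset.sum_congr rfl fun k _ => ?_
  ring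

/-- for the signed Frenet curvature `k̃(x,u,w)` in covariant coordinates
on `(ℝ², g)`, the covariant momenta are `π⁽¹⁾ᵢ = ∂k̃/∂wⁱ = −√(det g)·ε_{ij}uʲ/‖u‖³`
pointwise, and along any smooth curve with nonvanishing velocity,
`πᵢ = ∂k̃/∂uⁱ − (π⁽¹⁾)'ᵢ = −√(det g)·ε_{ij}wʲ/‖u‖³`. -/
theorem stmt_13 (g ginv : (Fin 2 → ℝ) → Fin 2 → Fin 2 → ℝ)
    (hg : ∀ i j, ContDiff ℝ (⊤ : ℕ∞) (fun x => g x i j))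
    (hsymm : ∀ x i j, g x i j = g x j i)
    (hpos : ∀ (x u : Fin 2 → ℝ), u ≠ 0 → 0 < ∑ i, ∑ j, g x i j * u i * u j)
    (hinv : ∀ x i j, ∑ k, ginv x i k * g x k j = if i = j then (1 : ℝ) else 0) :
    (∀ x u w : Fin 2 → ℝ, u ≠ 0 → ∀ i : Fin 2,
      fderiv ℝ (frenetKCov g) (x, u, w) (0, 0, Pi.single i 1)
        = -(Real.sqrt (detg g x) * epsRow i u) / gnorm g x u ^ 3) ∧
    (∀ x : ℝ → Fin 2 → ℝ, ContDiff ℝ (⊤ : ℕ∞) x → (∀ t : ℝ, deriv x t ≠ 0) →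
      ∀ (t : ℝ) (i : Fin 2),
        fderiv ℝ (frenetKCov g) (jet2Cov g ginv x t) (0, Pi.single i 1, 0)
          - covDeriv g ginv x
              (fun s j =>
                fderiv ℝ (frenetKCov g) (jet2Cov g ginv x s) (0, 0, Pi.single j 1))
              t i
        = -(Real.sqrt (detg g (x t)) * epsRow i ((jet2Cov g ginv x t).2.2))
            / gnorm g (x t) (deriv x t) ^ 3) := by
  refine ⟨fun x u w hu i => aux_dw g hg hsymm hpos x u w hu i, ?_⟩
  intro x hx hxd t i
  have hα : (fun (s : ℝ) (j : Fin 2) =>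
      fderiv ℝ (frenetKCov g) (jet2Cov g ginv x s) (0, 0, Pi.single j 1))
      = fun s j => -(Real.sqrt (detg g (x s)) * epsRow j (deriv x s))
        / gnorm g (x s) (deriv x s) ^ 3 := by
    funext s j
    exact aux_dw g hg hsymm hpos _ _ _ (hxd s) j
  rw [hα]
  have hdu : fderiv ℝ (frenetKCov g) (jet2Cov g ginv x t) (0, Pi.single i 1, 0) = _ :=
    aux_du g hg hsymm hpos _ _ _ (hxd t) i
  rw [hdu]
  have hQ := hpos (x t) (deriv x t) (hxd t)
  have hD := aux_detg_pos g hsymm hpos (x t)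
  have hx1 : HasDerivAt x (deriv x t) t := ((hx.differentiable (by simp)) t).hasDerivAt
  have hdx : Differentiable ℝ (deriv x) := by
    have : ContDiff ℝ (1 + 1) x := hx.of_le (by norm_cast)
    exact (contDiff_succ_iff_deriv.1 this).2.2.differentiable (by simp)
  have hx2 : HasDerivAt (deriv x) (deriv (deriv x) t) t := (hdx t).hasDerivAt
  have hu : ∀ j, HasDerivAt (fun s => deriv x s j) (deriv (deriv x) t j) t :=
    fun j => (hasDerivAt_pi.1 hx2) j
  have hgt : ∀ k j, HasDerivAt (fun s => g (x s) k j)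
      (deriv x t 0 * pd (fun y => g y k j) 0 (x t)
        + deriv x t 1 * pd (fun y => g y k j) 1 (x t)) t := by
    intro k j
    have h1 : HasFDerivAt (fun y => g y k j) (fderiv ℝ (fun y => g y k j) (x t)) (x t) :=
      (((hg k j).differentiable (by simp)) (x t)).hasFDerivAt
    refine (h1.comp_hasDerivAt t hx1).congr_deriv ?_
    have : deriv x t = deriv x t 0 • (Pi.single 0 1 : Fin 2 → ℝ)
        + deriv x t 1 • (Pi.single 1 1 : Fin 2 → ℝ) := by
      ext m; fin_cases m <;> simp
    conv_lhs => rw [this]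
    rw [map_add, map_smul, map_smul]
    rfl
  have hc := aux_compat g ginv hsymm hinv (x t)
  have hcs := aux_chr_symm g ginv hsymm (x t)
  simp only [hc, Fin.sum_univ_two, hcs _ 1 0] at hgt
  have hDt := (((hgt 0 0).mul (hgt 1 1)).sub ((hgt 0 1).mul (hgt 1 0))).sqrt hD.ne'
  have hq : ∀ j k : Fin 2, HasDerivAt (fun s : ℝ => g (x s) j k * deriv x s j * deriv x s k) _ t :=
    fun j k => ((hgt j k).mul (hu j)).mul (hu k)
  have hn := (((hq 0 0).add (hq 0 1)).add ((hq 1 0).add (hq 1 1))).sqrt (by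
    simpa [Fin.sum_univ_two] using hQ.ne')
  have hw : ∀ m, deriv (deriv x) t m = (jet2Cov g ginv x t).2.2 m
      - ∑ l, ∑ j, christoffel g ginv m l j (x t) * deriv x t l * deriv x t j := by
    intro m; simp [jet2Cov, covAccel]
  simp only [Fin.sum_univ_two, hcs _ 1 0] at hw
  have hs := hsymm (x t) 1 0
  have hS' : HasDerivAt (fun s => Real.sqrt (detg g (x s)))
      (Real.sqrt (detg g (x t)) *
        (deriv x t 0 * christoffel g ginv 0 0 0 (x t) + deriv x t 1 * christoffel g ginv 0 0 1 (x t)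
        + deriv x t 0 * christoffel g ginv 1 0 1 (x t)
        + deriv x t 1 * christoffel g ginv 1 1 1 (x t))) t := by
    refine hDt.congr_deriv ?_
    have hS := Real.sqrt_pos.2 hD
    have hSS := Real.sq_sqrt hD.le
    change _ / (2 * Real.sqrt (detg g (x t))) = _
    rw [div_eq_iff (by positivity)]
    generalize Real.sqrt (detg g (x t)) = S at *
    unfold detg at hSS
    simp only [hs, hcs _ 1 0] at hSS ⊢
    linear_combination (-2 * (deriv x t 0 * christoffel g ginv 0 0 0 (x t)
      + deriv x t 1 * christoffel g ginv 0 0 1 (x t)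
        + deriv x t 0 * christoffel g ginv 1 0 1 (x t)
        + deriv x t 1 * christoffel g ginv 1 1 1 (x t))) * hSS
  have hN := Real.sqrt_pos.2 hQ
  have hNN := Real.sq_sqrt hQ.le
  change 0 < gnorm g (x t) (deriv x t) at hN
  change gnorm g (x t) (deriv x t) ^ 2 = _ at hNN
  have hN' : HasDerivAt (fun s => gnorm g (x s) (deriv x s))
      ((g (x t) 0 0 * deriv x t 0 * (jet2Cov g ginv x t).2.2 0
        + g (x t) 0 1 * (deriv x t 0 * (jet2Cov g ginv x t).2.2 1
          + deriv x t 1 * (jet2Cov g ginv x t).2.2 0)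
        + g (x t) 1 1 * deriv x t 1 * (jet2Cov g ginv x t).2.2 1)
        / gnorm g (x t) (deriv x t)) t := by
    refine (hn.congr_of_eventuallyEq (.of_forall fun s => ?_)).congr_deriv ?_
    · simp only [gnorm, Fin.sum_univ_two, Pi.add_apply]
    have e2 : gnorm g (x t) (deriv x t) = Real.sqrt (g (x t) 0 0 * deriv x t 0 * deriv x t 0
      + g (x t) 0 1 * deriv x t 0 * deriv x t 1
      + (g (x t) 1 0 * deriv x t 1 * deriv x t 0 + g (x t) 1 1 * deriv x t 1 * deriv x t 1)) := by
      simp [gnorm, Fin.sum_univ_two]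
    simp only [Pi.add_apply, Pi.mul_apply]
    rw [← e2]
    rw [div_eq_div_iff (by positivity) (by positivity)]
    simp only [hw, hs, hcs _ 1 0]
    ring
  simp only [Fin.sum_univ_two] at hNN
  unfold covDeriv
  have he : HasDerivAt (fun s => epsRow i (deriv x s)) (epsRow i (deriv (deriv x) t)) t := by
    fin_cases i
    · simpa [epsRow] using hu 1
    · simpa [epsRow] using (hu 0).fun_neg
  have hα' := ((hS'.fun_mul he).fun_neg).fun_div (hN'.fun_pow 3) (pow_ne_zero 3 hN.ne')
  rw [hα'.deriv]
  simp only [Fin.sum_univ_two]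
  change Real.sqrt (detg g (x t)) * epsRow i (jet2Cov g ginv x t).2.2 /
    gnorm g (x t) (deriv x t) ^ 3 - _ * (_ * (jet2Cov g ginv x t).2.2 1
    - _ * (jet2Cov g ginv x t).2.2 0) * _ / _ - _ = _
  generalize (jet2Cov g ginv x t).2.2 = w at *
  clear hα' hN' hS' hn hDt hgt hdu hα
  generalize gnorm g (x t) (deriv x t) = N at *
  generalize Real.sqrt (detg g (x t)) = S at *
  rw [hs] at hNN
  have hN0 := hN.ne'
  fin_cases i <;> simp [epsRow, hw, hs, hcs _ 1 0] <;> field_simp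
  · linear_combination 3 * S * w 1 * hNN
  · linear_combination (-3) * S * w 0 * hNN
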